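/- Let L ≥ 4 be an even integer and let D ⊆ V_L be a set of vertices of the toric lattice of even cardinality. Let J ∈ F₂^{E_L} have minimum Hamming weight subject to ∂₁ J = 𝟙_D (such J exists since |D| is even). Then there exists a 2-chain c ∈ F₂^{P_L} such that J' = J + ∂₂ c satisfies: the Hamming weight of J' equals that of J, ∂₁ J' = 𝟙_D, and every vertex of D is an endpoint of exactly one edge in the support of J'. In particular, there is a minimum-weight solution of ∂₁ J = 𝟙_D in which every vertex of D is incident to exactly one edge of the support of J. -/

import Mathlib

/-- Vertices of the `L × L` toric lattice. -/
abbrev TV (L : ℕ) := ZMod L × ZMod L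

/-- Edge indices of the toric lattice: `((i,j), 0)` joins `(i,j)` and `(i+1,j)`;
`((i,j), 1)` joins `(i,j)` and `(i,j+1)`. -/
abbrev TE (L : ℕ) := (ZMod L × ZMod L) × Fin 2

/-- Plaquette indices of the toric lattice. -/
abbrev TP (L : ℕ) := ZMod L × ZMod L

/-- First endpoint of an edge. -/
def tEp1 {L : ℕ} (e : TE L) : TV L := e.1

/-- Second endpoint of an edge. -/
def tEp2 {L : ℕ} (e : TE L) : TV L :=
  if e.2 = 0 then (e.1.1 + 1, e.1.2) else (e.1.1, e.1.2 + 1)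

/-- Vertex–edge incidence matrix over `F₂`. -/
def tM1 (L : ℕ) : Matrix (TV L) (TE L) (ZMod 2) := fun v e =>
  if v = tEp1 e ∨ v = tEp2 e then 1 else 0

/-- Edge–plaquette incidence matrix over `F₂`: the plaquette `(i,j)` has the four
boundary edges `((i,j),0)`, `((i,j),1)`, `((i,j+1),0)`, `((i+1,j),1)`. -/
def tM2 (L : ℕ) : Matrix (TE L) (TP L) (ZMod 2) := fun e q =>
  if e = ((q.1, q.2), (0 : Fin 2)) ∨ e = ((q.1, q.2), (1 : Fin 2)) ∨
      e = ((q.1, q.2 + 1), (0 : Fin 2)) ∨ e = ((q.1 + 1, q.2), (1 : Fin 2))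
  then 1 else 0

/-- The boundary map `∂₁ : F₂^{E_L} → F₂^{V_L}`, sending the indicator of an edge to
the sum of the indicators of its two endpoints. -/
def tD1 (L : ℕ) [NeZero L] : (TE L → ZMod 2) →ₗ[ZMod 2] (TV L → ZMod 2) :=
  (tM1 L).mulVecLin

/-- The boundary map `∂₂ : F₂^{P_L} → F₂^{E_L}`, sending the indicator of a plaquette to
the sum of the indicators of its four boundary edges. -/
def tD2 (L : ℕ) [NeZero L] : (TP L → ZMod 2) →ₗ[ZMod 2] (TE L → ZMod 2) :=
  (tM2 L).mulVecLin

/-- The transpose `∂₁^* : F₂^{E_L} → F₂^{P_L}` of `∂₂`. -/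
def tD1s (L : ℕ) [NeZero L] : (TE L → ZMod 2) →ₗ[ZMod 2] (TP L → ZMod 2) :=
  (Matrix.transpose (tM2 L)).mulVecLin

/-- The transpose `∂₂^* : F₂^{V_L} → F₂^{E_L}` of `∂₁`. -/
def tD2s (L : ℕ) [NeZero L] : (TV L → ZMod 2) →ₗ[ZMod 2] (TE L → ZMod 2) :=
  (Matrix.transpose (tM1 L)).mulVecLin

/-- Hamming weight of an `F₂`-vector. -/
def wt {α : Type*} [Fintype α] (x : α → ZMod 2) : ℕ :=
  (Finset.univ.filter fun a => x a ≠ 0).card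

/-- Indicator vector of a finite set of coordinates. -/
def ind {α : Type*} [Fintype α] [DecidableEq α] (D : Finset α) : α → ZMod 2 :=
  fun a => if a ∈ D then 1 else 0


section helpers
variable {L : ℕ} [NeZero L]

/-- integer value of a bit -/
def iv (x : ZMod 2) : ℤ := (x.val : ℤ)

/-- degree of a vertex -/
def dg (J : TE L → ZMod 2) (v : TV L) : ℤ :=
  iv (J ((v.1, v.2), 0)) + iv (J ((v.1 - 1, v.2), 0)) + iv (J ((v.1, v.2), 1))
    + iv (J ((v.1, v.2 - 1), 1))

lemma zmod_one_ne (hL : 4 ≤ L) : (1 : ZMod L) ≠ 0 := by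
  have : Fact (1 < L) := ⟨by omega⟩
  exact one_ne_zero

/-- the star of a vertex -/
def tStar (v : TV L) : Finset (TE L) :=
  {((v.1, v.2), 0), ((v.1 - 1, v.2), 0), ((v.1, v.2), 1), ((v.1, v.2 - 1), 1)}

lemma filter_star (v : TV L) :
    (Finset.univ.filter (fun e : TE L => v = tEp1 e ∨ v = tEp2 e)) = tStar v := by
  ext ⟨⟨i, j⟩, k⟩
  obtain ⟨x, y⟩ := v
  fin_cases k <;> simp [tStar, tEp1, tEp2] <;> grind

lemma sum_star (hL : 4 ≤ L) {M : Type*} [AddCommMonoid M] (f : TE L → M) (v : TV L) :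
    ∑ e ∈ tStar v, f e = f ((v.1, v.2), 0) + f ((v.1 - 1, v.2), 0) + f ((v.1, v.2), 1)
      + f ((v.1, v.2 - 1), 1) := by
  have h1 := zmod_one_ne hL
  obtain ⟨x, y⟩ := v
  unfold tStar
  rw [Finset.sum_insert, Finset.sum_insert, Finset.sum_insert, Finset.sum_singleton]
  · simp only [add_assoc]
  all_goals simp [h1, eq_comm (a := x), eq_comm (a := y)]

lemma iv_ite (x : ZMod 2) : (if x ≠ 0 then (1 : ℤ) else 0) = iv x := by
  revert x; decide

lemma iv_cases (x : ZMod 2) : iv x = 0 ∨ iv x = 1 := by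
  revert x; decide

lemma iv_cast (x : ZMod 2) : ((iv x : ℤ) : ZMod 2) = x := by
  revert x; decide

lemma card_eq_dg (hL : 4 ≤ L) (J : TE L → ZMod 2) (v : TV L) :
    (((Finset.univ.filter
          (fun e : TE L => J e ≠ 0 ∧ (v = tEp1 e ∨ v = tEp2 e))).card : ℕ) : ℤ) = dg J v := by
  have : (Finset.univ.filter
      (fun e : TE L => J e ≠ 0 ∧ (v = tEp1 e ∨ v = tEp2 e))) = (tStar v).filter (fun e => J e ≠ 0) := by
    rw [← filter_star]; ext e; simp [and_comm]
  rw [this, Finset.card_filter]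
  push_cast
  rw [sum_star hL]
  simp only [iv_ite, dg]

lemma tD1_apply (hL : 4 ≤ L) (J : TE L → ZMod 2) (v : TV L) :
    tD1 L J v = J ((v.1, v.2), 0) + J ((v.1 - 1, v.2), 0) + J ((v.1, v.2), 1)
      + J ((v.1, v.2 - 1), 1) := by
  rw [← sum_star hL, ← filter_star, Finset.sum_filter]
  simp [tD1, Matrix.mulVec, dotProduct, tM1]

lemma tD1_dg (hL : 4 ≤ L) (J : TE L → ZMod 2) (v : TV L) :
    tD1 L J v = ((dg J v : ℤ) : ZMod 2) := by
  rw [tD1_apply hL, dg]; push_cast; simp only [iv_cast]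

lemma wt_eq (J : TE L → ZMod 2) : ((wt J : ℕ) : ℤ) = ∑ e, iv (J e) := by
  unfold wt
  rw [Finset.card_filter]; push_cast
  exact Finset.sum_congr rfl fun e _ => iv_ite _

lemma tD2_single (p : TP L) (e : TE L) : tD2 L (Pi.single p 1) e = tM2 L e p := by
  simp [tD2]

lemma tM2_h (hL : 4 ≤ L) (x y i j : ZMod L) : tM2 L ((x, y), 0) (i, j) =
    (if x = i then 1 else 0) * ((if y = j then 1 else 0) + (if y = j + 1 then 1 else 0)) := by
  have h1 := zmod_one_ne hL
  simp only [tM2, Prod.mk.injEq]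
  by_cases hx : x = i <;> by_cases hy : y = j <;> by_cases hy' : y = j + 1 <;> simp_all

lemma tM2_v (hL : 4 ≤ L) (x y i j : ZMod L) : tM2 L ((x, y), 1) (i, j) =
    (if y = j then 1 else 0) * ((if x = i then 1 else 0) + (if x = i + 1 then 1 else 0)) := by
  have h1 := zmod_one_ne hL
  simp only [tM2, Prod.mk.injEq]
  by_cases hx : y = j <;> by_cases hy : x = i <;> by_cases hy' : x = i + 1 <;> simp_all

lemma tD1_tD2_single (hL : 4 ≤ L) (p : TP L) : tD1 L (tD2 L (Pi.single p 1)) = 0 := by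
  ext ⟨x, y⟩
  obtain ⟨i, j⟩ := p
  rw [tD1_apply hL]
  simp only [tD2_single, tM2_h hL, tM2_v hL, sub_eq_iff_eq_add, add_left_inj, Pi.zero_apply]
  generalize (if x = i then (1 : ZMod 2) else 0) = a
  generalize (if x = i + 1 then (1 : ZMod 2) else 0) = a'
  generalize (if y = j then (1 : ZMod 2) else 0) = b
  generalize (if y = j + 1 then (1 : ZMod 2) else 0) = b'
  revert a a' b b'; decide

lemma flip_h (hL : 4 ≤ L) (J : TE L → ZMod 2) (i j x y : ZMod L) :
    iv ((J + tD2 L (Pi.single (i, j) 1)) ((x, y), 0)) = iv (J ((x, y), 0)) +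
      (if x = i then 1 else 0) * ((if y = j then 1 else 0) * (1 - 2 * iv (J ((i, j), 0)))
        + (if y = j + 1 then 1 else 0) * (1 - 2 * iv (J ((i, j + 1), 0)))) := by
  have h1 := zmod_one_ne hL
  have key : ∀ a : ZMod 2, iv (a + 1) = iv a + (1 - 2 * iv a) := by decide
  simp only [Pi.add_apply, tD2_single, tM2_h hL]
  by_cases hx : x = i <;> by_cases hy : y = j <;> by_cases hy' : y = j + 1 <;> simp_all

lemma flip_v (hL : 4 ≤ L) (J : TE L → ZMod 2) (i j x y : ZMod L) :
    iv ((J + tD2 L (Pi.single (i, j) 1)) ((x, y), 1)) = iv (J ((x, y), 1)) +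
      (if y = j then 1 else 0) * ((if x = i then 1 else 0) * (1 - 2 * iv (J ((i, j), 1)))
        + (if x = i + 1 then 1 else 0) * (1 - 2 * iv (J ((i + 1, j), 1)))) := by
  have h1 := zmod_one_ne hL
  have key : ∀ a : ZMod 2, iv (a + 1) = iv a + (1 - 2 * iv a) := by decide
  simp only [Pi.add_apply, tD2_single, tM2_v hL]
  by_cases hx : y = j <;> by_cases hy : x = i <;> by_cases hy' : x = i + 1 <;> simp_all

lemma wt_split (J : TE L → ZMod 2) : ((wt J : ℕ) : ℤ) =
    ∑ x : ZMod L, ∑ y : ZMod L, (iv (J ((x, y), 0)) + iv (J ((x, y), 1))) := by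
  rw [wt_eq, Fintype.sum_prod_type, Fintype.sum_prod_type]
  simp [Fin.sum_univ_two]

lemma wt_flip (hL : 4 ≤ L) (J : TE L → ZMod 2) (i j : ZMod L) :
    ((wt (J + tD2 L (Pi.single (i, j) 1)) : ℕ) : ℤ) = wt J + 4
      - 2 * (iv (J ((i, j), 0)) + iv (J ((i, j + 1), 0)) + iv (J ((i, j), 1))
        + iv (J ((i + 1, j), 1))) := by
  rw [wt_split, wt_split]
  simp only [flip_h hL, flip_v hL, Finset.sum_add_distrib, mul_add, ite_mul, one_mul, zero_mul,
    ← Finset.mul_sum, Finset.sum_ite_eq', Finset.sum_ite_eq, Finset.mem_univ, if_true]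
  simp [Finset.sum_ite_eq']
  ring



/-- A (helical) Hamiltonian cycle of the torus. -/
def hf (L : ℕ) (k : ℕ) : TV L := ((k : ZMod L) - ((k / L : ℕ) : ZMod L), ((k / L : ℕ) : ZMod L))

/-- The edges of the Hamiltonian cycle. -/
def he (L : ℕ) (k : ℕ) : TE L := if L ∣ k + 1 then (hf L k, 1) else (hf L k, 0)

lemma he_ep1 (k : ℕ) : tEp1 (he L k) = hf L k := by
  unfold he tEp1; split_ifs <;> rfl

lemma he_ep2 (k : ℕ) : tEp2 (he L k) = hf L (k + 1) := by
  unfold he tEp2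
  split_ifs with h1 h2
  · simp at h2
  · simp only [hf, Nat.succ_div, if_pos h1]; ext <;> push_cast <;> ring
  · simp only [hf, Nat.succ_div, if_neg h1]; ext <;> push_cast <;> ring
  · simp_all

lemma hf_injOn : Set.InjOn (hf L) (Finset.range (L * L) : Finset ℕ) := by
  intro a ha b hb h
  simp only [Finset.coe_range, Set.mem_Iio] at ha hb
  simp only [hf, Prod.mk.injEq] at h
  obtain ⟨h1, h2⟩ := h
  rw [h2, sub_left_inj, ZMod.natCast_eq_natCast_iff'] at h1
  rw [ZMod.natCast_eq_natCast_iff', Nat.mod_eq_of_lt (Nat.div_lt_of_lt_mul ha),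
    Nat.mod_eq_of_lt (Nat.div_lt_of_lt_mul hb)] at h2
  rw [← Nat.div_add_mod a L, ← Nat.div_add_mod b L, h1, h2]

lemma hf_image : (Finset.range (L * L)).image (hf L) = Finset.univ := by
  apply Finset.eq_univ_of_card
  rw [Finset.card_image_of_injOn hf_injOn]
  simp [ZMod.card]

lemma hf_sum {M : Type*} [AddCommMonoid M] (g : TV L → M) :
    ∑ k ∈ Finset.range (L * L), g (hf L k) = ∑ v, g v := by
  rw [← hf_image, Finset.sum_image hf_injOn]

lemma ham_sol (hL : 4 ≤ L) (d : TV L → ZMod 2) (T : ℕ → ZMod 2) (hT : T (L * L) = T 0)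
    (hd : ∀ k, T (k + 1) = T k + d (hf L k)) :
    ∃ K : TE L → ZMod 2, tD1 L K = d ∧
      (wt K : ℤ) ≤ ∑ k ∈ Finset.range (L * L), iv (T (k + 1)) := by
  have h1 := zmod_one_ne hL
  refine ⟨∑ k ∈ Finset.range (L * L), T (k + 1) • Pi.single (he L k) 1, ?_, ?_⟩
  · ext v
    rw [map_sum]
    simp only [map_smul, Finset.sum_apply, Pi.smul_apply, smul_eq_mul]
    have e1 : ∀ k, tD1 L (Pi.single (he L k) 1) v =
        (if v = hf L k then 1 else 0) + (if v = hf L (k + 1) then 1 else 0) := by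
      intro k
      have hne : tEp1 (he L k) ≠ tEp2 (he L k) := by
        unfold tEp1 tEp2
        intro h
        split_ifs at h <;> simp [Prod.ext_iff, h1] at h
      rw [he_ep1, he_ep2] at hne
      simp only [tD1, Matrix.mulVecLin_apply, Matrix.mulVec_single_one, Matrix.col_apply, tM1, he_ep1, he_ep2]
      by_cases ha : v = hf L k <;> by_cases hb : v = hf L (k + 1) <;> simp_all
    simp only [e1, mul_add, Finset.sum_add_distrib]
    have hN : hf L (L * L) = hf L 0 := by
      have : 0 < L := by omega
      simp [hf, this]
    have e2 := Finset.sum_range_succ (fun k => T k * (if v = hf L k then 1 else 0)) (L * L)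
    rw [Finset.sum_range_succ', hT, hN] at e2
    rw [add_right_cancel e2, ← Finset.sum_add_distrib]
    have e3 : ∀ k, T (k + 1) * (if v = hf L k then 1 else 0) + T k * (if v = hf L k then 1 else 0)
        = (fun w => d w * (if v = w then 1 else 0)) (hf L k) := by
      intro k
      rw [hd]
      beta_reduce
      generalize T k = a
      generalize (if v = hf L k then (1 : ZMod 2) else 0) = b
      generalize d (hf L k) = c
      revert a b c; decide
    simp only [e3]
    rw [hf_sum (fun w => d w * (if v = w then 1 else 0))]
    simp
  · simp only [← iv_ite, ← Nat.cast_ofNat (R := ℤ)]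
    rw [Finset.sum_ite]
    simp only [Finset.sum_const, Finset.sum_const_zero, add_zero, smul_eq_mul, nsmul_eq_mul, mul_one]
    norm_cast
    refine le_trans (Finset.card_le_card (t := Finset.image (he L)
      (Finset.filter (fun k => T (k + 1) ≠ 0) (Finset.range (L * L)))) ?_) Finset.card_image_le
    intro e he'
    simp only [Finset.mem_filter, Finset.mem_univ, true_and, Finset.sum_apply] at he'
    obtain ⟨k, hk, hk'⟩ := Finset.exists_ne_zero_of_sum_ne_zero he'
    simp only [Finset.mem_image, Finset.mem_filter]
    refine ⟨k, ⟨hk, ?_⟩, ?_⟩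
    · rintro h; simp [h] at hk'
    · by_contra h
      simp [Pi.single_apply, Ne.symm h] at hk'

lemma min_bound (hL : 4 ≤ L) (D : Finset (TV L)) (hD : Even D.card) (J : TE L → ZMod 2)
    (hmin : ∀ K : TE L → ZMod 2, tD1 L K = ind D → wt J ≤ wt K) :
    2 * (wt J : ℤ) ≤ L * L := by
  let T : ℕ → ZMod 2 := fun k => ∑ m ∈ Finset.range k, ind D (hf L m)
  have hT0 : T 0 = 0 := by simp [T]
  have hTN : T (L * L) = 0 := by
    simp only [T]
    rw [hf_sum]
    simp only [ind, Finset.sum_boole]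
    rw [Finset.filter_univ_mem]
    exact (ZMod.natCast_eq_zero_iff_even).2 hD
  have hd : ∀ k, T (k + 1) = T k + ind D (hf L k) := fun k => by
    simp only [T, Finset.sum_range_succ]
  obtain ⟨K, hK, hw⟩ := ham_sol hL (ind D) T (by rw [hT0, hTN]) hd
  obtain ⟨K', hK', hw'⟩ := ham_sol hL (ind D) (fun k => T k + 1) (by simp only [hT0, hTN])
    (fun k => by simp only [hd]; ring)
  have m1 := hmin K hK
  have m2 := hmin K' hK'
  have e : ∑ k ∈ Finset.range (L * L), iv (T (k + 1))
      + ∑ k ∈ Finset.range (L * L), iv (T (k + 1) + 1) = L * L := by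
    rw [← Finset.sum_add_distrib]
    have : ∀ a : ZMod 2, iv a + iv (a + 1) = 1 := by decide
    simp [this]
  zify at m1 m2
  linarith

lemma sum_shift_x (g : ZMod L → ZMod L → ℤ) :
    ∑ x, ∑ y, g (x - 1) y = ∑ x, ∑ y, g x y :=
  Equiv.sum_comp (Equiv.subRight (1 : ZMod L)) (fun x => ∑ y, g x y)

lemma sum_shift_y (g : ZMod L → ZMod L → ℤ) :
    ∑ x, ∑ y, g x (y - 1) = ∑ x, ∑ y, g x y :=
  Finset.sum_congr rfl fun x _ => Equiv.sum_comp (Equiv.subRight (1 : ZMod L)) (fun y => g x y)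

/-- lower bound when a colour class is included in D -/
lemma lower_bound (J : TE L → ZMod 2) (s : ZMod L → ZMod L → ℤ)
    (hx : ∀ x y, s (x + 1) y = 1 - s x y) (hy : ∀ x y, s x (y + 1) = 1 - s x y)
    (h0 : ∀ x y, s x y = 0 ∨ s x y = 1)
    (h1 : ∀ x y, s x y = 1 → 1 ≤ dg J (x, y)) (a b : ZMod L) (hab : s a b = 1)
    (h3 : 2 ≤ dg J (a, b)) : (L * L : ℤ) < 2 * wt J := by
  have A : (wt J : ℤ) = ∑ x, ∑ y, s x y * dg J (x, y) := by
    rw [wt_split]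
    simp only [dg, mul_add, Finset.sum_add_distrib]
    have e1 := sum_shift_x (fun x y => s (x + 1) y * iv (J ((x, y), 0)))
    have e2 := sum_shift_y (fun x y => s x (y + 1) * iv (J ((x, y), 1)))
    simp only [sub_add_cancel] at e1 e2
    rw [e1, e2]
    simp only [hx, hy, sub_mul, one_mul, Finset.sum_sub_distrib]
    ring
  have B : (L * L : ℤ) = 2 * ∑ x, ∑ y, s x y := by
    have e1 := sum_shift_x (fun x y => s (x + 1) y)
    simp only [sub_add_cancel, hx, Finset.sum_sub_distrib] at e1
    simp [ZMod.card] at e1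
    linarith
  have C : ∑ x, ∑ y, s x y < ∑ x, ∑ y, s x y * dg J (x, y) := by
    have le : ∀ x y, s x y ≤ s x y * dg J (x, y) := by
      intro x y
      rcases h0 x y with h | h
      · simp [h]
      · have := h1 x y h
        rw [h]; linarith
    refine Finset.sum_lt_sum (fun x _ => Finset.sum_le_sum fun y _ => le x y)
      ⟨a, Finset.mem_univ _, Finset.sum_lt_sum (fun y _ => le a y) ⟨b, Finset.mem_univ _, ?_⟩⟩
    rw [hab]; linarith
  rw [A, B]; linarith


/-- head of a plaquette -/
def pHead (c q : ZMod L → ℤ) (i j : ZMod L) : TV L :=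
  (if q j = 1 then i + 1 else i, if c i = 1 then j + 1 else j)

/-- tail of a plaquette -/
def pTail (c q : ZMod L → ℤ) (i j : ZMod L) : TV L :=
  (if q j = 1 then i else i + 1, if c i = 1 then j else j + 1)

/-- the plaquette may be flipped forward -/
def Legal (c q : ZMod L → ℤ) (J : TE L → ZMod 2) (i j : ZMod L) : Prop :=
  2 * iv (J ((i, j), 0)) = 1 + c i ∧ 2 * iv (J ((i, j + 1), 0)) = 1 - c i ∧
  2 * iv (J ((i, j), 1)) = 1 + q j ∧ 2 * iv (J ((i + 1, j), 1)) = 1 - q j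

/-- alternating sign function -/
def Alt (c : ZMod L → ℤ) : Prop := (∀ i, c (i + 1) = - c i) ∧ ∀ i, c i = 1 ∨ c i = -1

lemma dg_flip (hL : 4 ≤ L) {c q : ZMod L → ℤ} (hc : Alt c) (hq : Alt q) (J : TE L → ZMod 2)
    (i j : ZMod L) (hl : Legal c q J i j) (v : TV L) :
    dg (J + tD2 L (Pi.single (i, j) 1)) v = dg J v + 2 * (if v = pHead c q i j then 1 else 0)
      - 2 * (if v = pTail c q i j then 1 else 0) := by
  obtain ⟨x, y⟩ := v
  obtain ⟨l1, l2, l3, l4⟩ := hl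
  simp only [dg, flip_h hL, flip_v hL, l1, l2, l3, l4, sub_eq_iff_eq_add, pHead, pTail,
    Prod.mk.injEq, ite_and]
  have m : ∀ (p r : Prop) [Decidable p] [Decidable r],
      (if p then (if r then (1 : ℤ) else 0) else 0) = (if p then 1 else 0) * (if r then 1 else 0) := by
    intro p r _ _; split_ifs <;> simp
  simp only [m]
  have n1 : ((-1 : ℤ) = 1) = False := by simp
  rcases hc.2 i with h | h <;> rcases hq.2 j with h' | h' <;> 
    simp only [h, h', n1, if_true, if_false] <;>
    generalize (if x = i then (1 : ℤ) else 0) = a <;>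
    generalize (if x = i + 1 then (1 : ℤ) else 0) = a' <;>
    generalize (if y = j then (1 : ℤ) else 0) = b <;>
    generalize (if y = j + 1 then (1 : ℤ) else 0) = b' <;> ring

lemma head_class {c q : ZMod L → ℤ} (hc : Alt c) (hq : Alt q) (i j : ZMod L) :
    c (pHead c q i j).1 = q (pHead c q i j).2 := by
  simp only [pHead]
  rcases hc.2 i with h | h <;> rcases hq.2 j with h' | h' <;> norm_num [h, h', hc.1, hq.1]

lemma head_surj {c q : ZMod L → ℤ} (hc : Alt c) (hq : Alt q) (u : TV L) (hu : c u.1 = q u.2) :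
    ∃ i j, pHead c q i j = u := by
  obtain ⟨x, y⟩ := u
  have h1 := hq.1 (y - 1)
  rw [sub_add_cancel] at h1
  simp only at hu
  rcases hc.2 x with h | h
  · refine ⟨x, y - 1, ?_⟩
    have : q (y - 1) = -1 := by linarith
    simp [pHead, h, this]
  · refine ⟨x, y, ?_⟩
    have : q y = -1 := by linarith
    simp [pHead, h, this]

lemma exists_legal (hL : 4 ≤ L) {c q : ZMod L → ℤ} (hc : Alt c) (hq : Alt q) (J : TE L → ZMod 2)
    (hm : ∀ p, wt J ≤ wt (J + tD2 L (Pi.single p 1))) (v : TV L) (hv : c v.1 = q v.2)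
    (h3 : 3 ≤ dg J v) : ∃ i j, Legal c q J i j ∧ pTail c q i j = v := by
  obtain ⟨x, y⟩ := v
  have hb : ∀ i j, iv (J ((i, j), 0)) + iv (J ((i, j + 1), 0)) + iv (J ((i, j), 1))
        + iv (J ((i + 1, j), 1)) ≤ 2 := by
    intro i j
    have := hm (i, j)
    zify at this
    rw [wt_flip hL] at this
    linarith
  have hi : ∀ e, 0 ≤ iv (J e) ∧ iv (J e) ≤ 1 := by
    intro e; rcases iv_cases (J e) with h | h <;> simp [h]
  have cx := hc.1 (x - 1)
  have qy := hq.1 (y - 1)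
  have b1 := hb x y
  have b2 := hb (x - 1) (y - 1)
  have b3 := hb (x - 1) y
  have b4 := hb x (y - 1)
  simp only [sub_add_cancel] at cx qy b1 b2 b3 b4
  simp only [dg] at h3 hv
  have i1 := hi ((x, y), 0)
  have i2 := hi ((x - 1, y), 0)
  have i3 := hi ((x, y), 1)
  have i4 := hi ((x, y - 1), 1)
  have i5 := hi ((x, y + 1), 0)
  have i6 := hi ((x + 1, y), 1)
  have i7 := hi ((x - 1, y - 1), 0)
  have i8 := hi ((x - 1, y - 1), 1)
  have i9 := hi ((x - 1, y + 1), 0)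
  have i10 := hi ((x - 1, y), 1)
  have i11 := hi ((x, y - 1), 0)
  have i12 := hi ((x + 1, y - 1), 1)
  rcases hc.2 x with h | h
  · have h' : q y = 1 := by linarith
    have h1 : c (x - 1) = -1 := by linarith
    have h2 : q (y - 1) = -1 := by linarith
    by_cases hh : iv (J ((x, y), 0)) = 1 ∧ iv (J ((x, y), 1)) = 1
    · refine ⟨x, y, ?_, by simp [pTail, h, h']⟩
      simp only [Legal, h, h']
      refine ⟨?_, ?_, ?_, ?_⟩ <;> omega
    · refine ⟨x - 1, y - 1, ?_, by simp [pTail, h1, h2]⟩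
      simp only [Legal, h1, h2, sub_add_cancel]
      refine ⟨?_, ?_, ?_, ?_⟩ <;> omega
  · have h' : q y = -1 := by linarith
    have h1 : c (x - 1) = 1 := by linarith
    have h2 : q (y - 1) = 1 := by linarith
    by_cases hh : iv (J ((x - 1, y), 0)) = 1 ∧ iv (J ((x, y), 1)) = 1
    · refine ⟨x - 1, y, ?_, by simp [pTail, h1, h']⟩
      simp only [Legal, h1, h', sub_add_cancel]
      refine ⟨?_, ?_, ?_, ?_⟩ <;> omega
    · refine ⟨x, y - 1, ?_, by simp [pTail, h, h2]⟩
      simp only [Legal, h, h2, sub_add_cancel]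
      refine ⟨?_, ?_, ?_, ?_⟩ <;> omega

lemma h_bound (h : ZMod L → ZMod L → ℤ) (a b : ZMod L) (h0 : h a b = 0)
    (hx : ∀ x y, h (x + 1) y ≤ h x y + 1) (hy : ∀ x y, h x (y + 1) ≤ h x y + 1) (x y : ZMod L) :
    h x y ≤ 2 * L := by
  have e1 : ∀ n : ℕ, h (a + n) b ≤ n := by
    intro n
    induction n with
    | zero => simp [h0]
    | succ n ih =>
      have := hx (a + n) b
      push_cast
      rw [← add_assoc]; linarith
  have e2 : ∀ (n m : ℕ), h (a + n) (b + m) ≤ n + m := by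
    intro n m
    induction m with
    | zero => simpa using e1 n
    | succ m ih =>
      have := hy (a + n) (b + m)
      push_cast
      rw [← add_assoc b]; linarith
  have := e2 (x - a).val (y - b).val
  simp only [ZMod.natCast_zmod_val, add_sub_cancel] at this
  have l1 := ZMod.val_lt (x - a)
  have l2 := ZMod.val_lt (y - b)
  zify at l1 l2
  linarith

/-- bad vertices -/
def badSet (D : Finset (TV L)) (J : TE L → ZMod 2) : Finset (TV L) :=
  D.filter (fun v => dg J v ≠ 1)

lemma exists_alt (hLe : Even L) : ∃ c : ZMod L → ℤ, Alt c := by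
  refine ⟨fun i => if ZMod.castHom hLe.two_dvd (ZMod 2) i = 0 then 1 else -1, ?_, ?_⟩
  · intro i
    simp only [map_add, map_one]
    generalize ZMod.castHom hLe.two_dvd (ZMod 2) i = a
    revert a; decide
  · intro i
    dsimp only
    split_ifs <;> simp

lemma dg_odd (hL : 4 ≤ L) {D : Finset (TV L)} {J : TE L → ZMod 2} (hJ : tD1 L J = ind D)
    {v : TV L} (hv : v ∈ D) : dg J v = 1 ∨ dg J v = 3 := by
  have h := congrFun hJ v
  rw [tD1_dg hL] at h
  simp only [ind, hv, if_true] at h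
  have i1 := iv_cases (J ((v.1, v.2), 0))
  have i2 := iv_cases (J ((v.1 - 1, v.2), 0))
  have i3 := iv_cases (J ((v.1, v.2), 1))
  have i4 := iv_cases (J ((v.1, v.2 - 1), 1))
  have hle : 0 ≤ dg J v ∧ dg J v ≤ 4 := by unfold dg; omega
  generalize dg J v = n at *
  obtain ⟨h1, h2⟩ := hle
  interval_cases n <;> revert h <;> decide

lemma no_bad (hL : 4 ≤ L) (hLe : Even L) (D : Finset (TV L)) (hD : Even D.card)
    (A : (TE L → ZMod 2) → Prop) (hA1 : ∀ J, A J → tD1 L J = ind D)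
    (hA2 : ∀ J, A J → ∀ K : TE L → ZMod 2, tD1 L K = ind D → wt J ≤ wt K)
    (hA3 : ∀ J, A J → ∀ p, wt (J + tD2 L (Pi.single p 1)) = wt J →
      A (J + tD2 L (Pi.single p 1)))
    (J₀ : TE L → ZMod 2) (hJ₀ : A J₀)
    (hB : ∀ J, A J → (badSet D J₀).card ≤ (badSet D J).card) : badSet D J₀ = ∅ := by
  by_contra hne
  obtain ⟨v₀, hv₀⟩ := Finset.nonempty_iff_ne_empty.2 hne
  simp only [badSet, Finset.mem_filter] at hv₀
  obtain ⟨c, hc⟩ := exists_alt hLe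
  obtain ⟨q, hq, hcq⟩ : ∃ q : ZMod L → ℤ, Alt q ∧ c v₀.1 = q v₀.2 := by
    by_cases h : c v₀.1 = c v₀.2
    · exact ⟨c, hc, h⟩
    · refine ⟨fun i => - c i, ⟨fun i => by simp only [hc.1], fun i => ?_⟩, ?_⟩
      · rcases hc.2 i with h | h <;> simp [h]
      · rcases hc.2 v₀.1 with h1 | h1 <;> rcases hc.2 v₀.2 with h2 | h2 <;> simp_all
  have hdg₀ : dg J₀ v₀ = 3 := (dg_odd hL (hA1 _ hJ₀) hv₀.1).resolve_left hv₀.2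
  by_cases hS : ∀ u : TV L, c u.1 = q u.2 → u ∈ D
  · have h1 := min_bound hL D hD J₀ (hA2 _ hJ₀)
    have h2 := lower_bound J₀ (fun x y => if c x = q y then 1 else 0)
      (by
        intro x y
        rcases hc.2 x with h | h <;> rcases hq.2 y with h' | h' <;> norm_num [hc.1, h, h'])
      (by
        intro x y
        rcases hc.2 x with h | h <;> rcases hq.2 y with h' | h' <;> norm_num [hq.1, h, h'])
      (by intro x y; split_ifs <;> simp)
      (by
        intro x y h
        have h' : c x = q y := by by_contra hh; simp [hh] at h
        rcases dg_odd hL (hA1 _ hJ₀) (hS (x, y) h') with h | h <;> omega)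
      v₀.1 v₀.2 (by simp [hcq]) (by rw [Prod.mk.eta]; omega)
    linarith
  · push Not at hS
    obtain ⟨u, hu, huD⟩ := hS
    obtain ⟨a, b, hab⟩ := head_surj hc hq u hu
    have main : ∀ n : ℕ, ∃ (h : ZMod L → ZMod L → ℤ) (J : TE L → ZMod 2) (v : TV L),
        A J ∧ (badSet D J).card ≤ (badSet D J₀).card ∧ v ∈ D ∧ dg J v ≠ 1 ∧ c v.1 = q v.2 ∧
        h a b = 0 ∧ ∑ x, ∑ y, h x y = n ∧
        (∀ x y, iv (J ((x, y + 1), 0)) = iv (J₀ ((x, y + 1), 0)) + c x * (h x y - h x (y + 1))) ∧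
        (∀ x y, iv (J ((x + 1, y), 1)) = iv (J₀ ((x + 1, y), 1)) + q y * (h x y - h (x + 1) y)) := by
      intro n
      induction n with
      | zero =>
        exact ⟨fun _ _ => 0, J₀, v₀, hJ₀, le_rfl, hv₀.1, hv₀.2, hcq, rfl, by simp, by simp, by simp⟩
      | succ n ih =>
        obtain ⟨h, J, v, hJA, hJB, hvD, hv1, hvS, hab0, hsum, hh, hv⟩ := ih
        have hdg := (dg_odd hL (hA1 _ hJA) hvD).resolve_left hv1
        have hbd : ∀ p, tD1 L (J + tD2 L (Pi.single p 1)) = ind D := by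
          intro p
          rw [map_add, tD1_tD2_single hL, add_zero, hA1 _ hJA]
        obtain ⟨i, j, hleg, htail⟩ := exists_legal hL hc hq J
          (fun p => hA2 _ hJA _ (hbd p)) v hvS hdg.ge
        have hA' := hA3 J hJA (i, j) (by
          have := wt_flip hL J i j
          obtain ⟨l1, l2, l3, l4⟩ := hleg
          zify; linarith)
        have hdeg := dg_flip hL hc hq J i j hleg
        rw [htail] at hdeg
        have hfh := flip_h hL J i j
        have hfv := flip_v hL J i j
        generalize J + tD2 L (Pi.single (i, j) 1) = J' at hA' hdeg hfh hfv
        have hHS := head_class hc hq i j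
        have hne : v ≠ pHead c q i j := by
          rw [← htail]
          have h1 := zmod_one_ne hL
          intro h
          simp only [pTail, pHead, Prod.mk.injEq] at h
          have := h.1
          split_ifs at this <;> simp [h1] at this
        have hv' : dg J' v = 1 := by
          rw [hdeg, if_neg hne, if_pos rfl, hdg]; norm_num
        have hvbad : v ∈ badSet D J := by simp [badSet, hvD, hv1]
        have hvbad' : v ∉ badSet D J' := by simp [badSet, hv']
        have hsub : ∀ w, w ≠ pHead c q i j → w ∈ badSet D J' → w ∈ (badSet D J).erase v := by
          intro w hw hwb
          have hwv : w ≠ v := by rintro rfl; exact hvbad' hwb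
          have := hdeg w
          simp only [hw, hwv, if_false] at this
          simp only [badSet, Finset.mem_filter, Finset.mem_erase] at hwb ⊢
          refine ⟨hwv, hwb.1, ?_⟩
          have h2 := hwb.2
          omega
        have hcard := Finset.card_erase_add_one hvbad
        have hB' := hB J' hA'
        have hwbad : pHead c q i j ∈ badSet D J' := by
          by_contra hcon
          have : badSet D J' ⊆ (badSet D J).erase v := by
            intro w hw
            exact hsub w (by rintro rfl; exact hcon hw) hw
          have := Finset.card_le_card this
          omega
        have hle : (badSet D J').card ≤ (badSet D J).card := by
          have : badSet D J' ⊆ insert (pHead c q i j) ((badSet D J).erase v) := by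
            intro w hw
            by_cases h : w = pHead c q i j
            · simp [h]
            · exact Finset.mem_insert_of_mem (hsub w h hw)
          have h1 := Finset.card_le_card this
          have h2 := Finset.card_insert_le (pHead c q i j) ((badSet D J).erase v)
          omega
        simp only [badSet, Finset.mem_filter] at hwbad
        refine ⟨fun x y => h x y + (if x = i then 1 else 0) * (if y = j then 1 else 0), J',
          pHead c q i j, hA', hle.trans hJB, hwbad.1, hwbad.2, hHS, ?_, ?_, ?_, ?_⟩
        · have : ¬ (a = i ∧ b = j) := by
            rintro ⟨rfl, rfl⟩
            rw [hab] at hwbad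
            exact huD hwbad.1
          beta_reduce
          rw [hab0]
          by_cases h1 : a = i
          · have h2 : b ≠ j := fun h => this ⟨h1, h⟩
            simp [h2]
          · simp [h1]
        · simp [Finset.sum_add_distrib, hsum]
        · intro x y
          obtain ⟨l1, l2, l3, l4⟩ := hleg
          rw [hfh, hh, l1, l2]
          simp only [add_left_inj]
          by_cases hx : x = i
          · subst hx; simp only [if_true]; ring
          · simp [hx]
        · intro x y
          obtain ⟨l1, l2, l3, l4⟩ := hleg
          rw [hfv, hv, l3, l4]
          simp only [add_left_inj]
          by_cases hy : y = j
          · subst hy; simp only [if_true]; ring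
          · simp [hy]
    obtain ⟨h, J, v, -, -, -, -, -, hab0, hsum, hh, hv⟩ := main (L * (L * (2 * L)) + 1)
    have hb := h_bound h a b hab0
      (by
        intro x y
        have := hv x y
        have i1 := iv_cases (J ((x + 1, y), 1))
        have i2 := iv_cases (J₀ ((x + 1, y), 1))
        rcases hq.2 y with h' | h' <;> rw [h'] at this <;> omega)
      (by
        intro x y
        have := hh x y
        have i1 := iv_cases (J ((x, y + 1), 0))
        have i2 := iv_cases (J₀ ((x, y + 1), 0))
        rcases hc.2 x with h' | h' <;> rw [h'] at this <;> omega)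
    have : ∑ x, ∑ y, h x y ≤ ∑ x : ZMod L, ∑ y : ZMod L, (2 * L : ℤ) :=
      Finset.sum_le_sum fun x _ => Finset.sum_le_sum fun y _ => hb x y
    rw [hsum] at this
    simp [ZMod.card] at this

end helpers

/-- **Dissolving degree-3 defects in the toric code.**
If `L ≥ 4` is even, `D` is an even-cardinality set of vertices, and `J` is a minimum
Hamming-weight solution of `∂₁ J = 𝟙_D`, then there is a `2`-chain `c` such that
`J' = J + ∂₂ c` has the same weight, the same boundary `𝟙_D`, and every vertex of `D`
is an endpoint of exactly one edge of the support of `J'`. -/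
theorem toric_degree3_defect_resolution
    (L : ℕ) [NeZero L] (hL : 4 ≤ L) (hLeven : Even L)
    (D : Finset (TV L)) (hD : Even D.card)
    (J : TE L → ZMod 2)
    (hJ : tD1 L J = ind D)
    (hmin : ∀ K : TE L → ZMod 2, tD1 L K = ind D → wt J ≤ wt K) :
    ∃ c : TP L → ZMod 2,
      wt (J + tD2 L c) = wt J ∧
      tD1 L (J + tD2 L c) = ind D ∧
      ∀ v ∈ D,
        (Finset.univ.filter
          (fun e : TE L => (J + tD2 L c) e ≠ 0 ∧ (v = tEp1 e ∨ v = tEp2 e))).card = 1 := by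

  classical
  let A : (TE L → ZMod 2) → Prop := fun K =>
    (∃ c, K = J + tD2 L c) ∧ wt K = wt J ∧ tD1 L K = ind D
  have hAJ : A J := ⟨⟨0, by simp⟩, rfl, hJ⟩
  obtain ⟨J₀, hJ₀, hB⟩ : ∃ J₀, A J₀ ∧ ∀ K, A K → (badSet D J₀).card ≤ (badSet D K).card := by
    have hex : ∃ n, ∃ K, A K ∧ (badSet D K).card = n := ⟨_, J, hAJ, rfl⟩
    obtain ⟨K, hK, hn⟩ := Nat.find_spec hex
    exact ⟨K, hK, fun K' hK' => by rw [hn]; exact Nat.find_min' hex ⟨K', hK', rfl⟩⟩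
  have hnb := no_bad hL hLeven D hD A (fun K hK => hK.2.2)
    (fun K hK K' hK' => by rw [hK.2.1]; exact hmin K' hK')
    (by
      rintro K ⟨⟨c, hc⟩, hw, hb⟩ p hp
      refine ⟨⟨c + Pi.single p 1, ?_⟩, hp.trans hw, ?_⟩
      · rw [hc, map_add, add_assoc]
      · rw [map_add, tD1_tD2_single hL, add_zero, hb])
    J₀ hJ₀ hB
  obtain ⟨⟨c, hc⟩, hw, hb⟩ := hJ₀
  refine ⟨c, by rw [← hc, hw], by rw [← hc, hb], ?_⟩
  intro v hv
  rw [← hc]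
  have h1 := card_eq_dg hL J₀ v
  have h2 : dg J₀ v = 1 := by
    by_contra h
    have : v ∈ badSet D J₀ := by simp [badSet, hv, h]
    rw [hnb] at this
    simp at this
  rw [h2] at h1
  exact_mod_cast h1
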